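/- Let q = 2^m, let p(X) = \sum_{i=0}^{k-1} p_i X^{2^i} be a weakly linearized polynomial over F_q, and let S be a subset of F_q \setminus \{0\} with |S| \ge 2^{m-1}. Then for every nonzero \alpha \in F_q with \alpha \notin S there exist \beta, \gamma \in S such that p(\alpha) = p(\beta) + p(\gamma); that is, when at least (n+1)/2 of the n = 2^m - 1 encoded fragments of the homomorphic self-repairing code are available, any missing encoded fragment can be recreated by XORing two available encoded fragments. -/

import Mathlib

/-- Let `q = 2^m`, let `p(X) = ∑_{i=0}^{k-1} p_i X^{2^i}` be a weakly
linearized polynomial over `F_q`, and let `S ⊆ F_q \ {0}` with `|S| ≥ 2^{m-1}`. Then for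
every nonzero `α ∈ F_q` with `α ∉ S` there exist `β, γ ∈ S` such that
`p(α) = p(β) + p(γ)`: when at least `(n+1)/2` of the `n = 2^m - 1` encoded fragments of
the homomorphic self-repairing code are available, any missing encoded fragment can be
recreated by XORing two available encoded fragments. -/
theorem self_repair_from_two_fragments
    {K : Type*} [Field K] [Fintype K] (m k : ℕ) (hm : 0 < m)
    (hcard : Fintype.card K = 2 ^ m)
    (p : Fin k → K)
    (S : Finset K) (hS0 : ∀ v ∈ S, v ≠ 0) (hScard : 2 ^ (m - 1) ≤ S.card)
    (α : K) (hα : α ≠ 0) (hαS : α ∉ S) :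
    ∃ β ∈ S, ∃ γ ∈ S,
      ∑ i : Fin k, p i * α ^ (2 ^ (i : ℕ)) =
        (∑ i : Fin k, p i * β ^ (2 ^ (i : ℕ))) +
        (∑ i : Fin k, p i * γ ^ (2 ^ (i : ℕ))) := by
  classical
  have h2 : (2 : K) = 0 := by
    have h : ((Fintype.card K : ℕ) : K) = 0 := Nat.cast_card_eq_zero K
    rw [hcard] at h
    push_cast at h
    exact pow_eq_zero_iff (by omega) |>.mp h
  haveI : CharP K 2 := CharTwo.of_one_ne_zero_of_two_eq_zero one_ne_zero h2
  haveI : Fact (Nat.Prime 2) := ⟨Nat.prime_two⟩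
  have hnd : ¬ Disjoint S (S.image (fun x => α + x)) := by
    intro hd
    have hc : (S.image (fun x => α + x)).card = S.card :=
      Finset.card_image_of_injective _ (add_right_injective α)
    have hu := Finset.card_union_of_disjoint hd
    have h0 : (0 : K) ∉ S ∪ S.image (fun x => α + x) := by
      intro h
      rcases Finset.mem_union.mp h with h | h
      · exact hS0 0 h rfl
      · obtain ⟨x, hx, hxe⟩ := Finset.mem_image.mp h
        have : α = x := CharTwo.add_eq_zero.mp hxe
        exact hαS (this ▸ hx)
    have hlt := Finset.card_lt_univ_of_notMem h0
    have hp : 2 ^ m = 2 * 2 ^ (m - 1) := by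
      rw [← pow_succ', Nat.sub_add_cancel hm]
    omega
  obtain ⟨β, hβ, hβ'⟩ := Finset.not_disjoint_iff.mp hnd
  obtain ⟨γ, hγ, hγe⟩ := Finset.mem_image.mp hβ'
  have hα' : α = β + γ := by
    rw [← hγe, add_assoc, CharTwo.add_self_eq_zero, add_zero]
  refine ⟨β, hβ, γ, hγ, ?_⟩
  rw [← Finset.sum_add_distrib]
  refine Finset.sum_congr rfl fun i _ => ?_
  rw [hα', add_pow_char_pow, mul_add]
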